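/- Let S be a simple (non-self-intersecting) polygon in the plane that is not convex and no two of whose sides are parallel, and let m ≥ 1 be an integer. Then there exists an indexed family of positive homothetic copies of S that forms an m-fold covering of the plane ℝ² and that cannot be decomposed into two coverings. -/

import Mathlib

/-!
STATEMENT 1: Let S be a simple (non-self-intersecting) polygon in the plane
that is not convex and no two of whose sides are parallel, and let m ≥ 1.
Then there exists an indexed family of positive homothetic copies of S that
forms an m-fold covering of ℝ² and that cannot be decomposed into two
coverings.
-/

noncomputable section

abbrev Plane : Type := EuclideanSpace ℝ (Fin 2)

/-- The homothetic copy `ε·S + p` of a set `S ⊆ ℝ²`. -/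
def homCopy (ε : ℝ) (p : Plane) (S : Set Plane) : Set Plane :=
  (fun x => ε • x + p) '' S

/-- The family `C` covers every point of `A` at least `m` times. -/
def MFoldCover {I : Type*} (m : ℕ) (C : I → Set Plane) (A : Set Plane) : Prop :=
  ∀ a ∈ A, ∃ t : Finset I, m ≤ t.card ∧ ∀ i ∈ t, a ∈ C i

/-- The family `C` can be decomposed into two coverings of the plane. -/
def DecomposableIntoTwoCoverings {I : Type*} (C : I → Set Plane) : Prop :=
  ∃ I₁ : Set I, (∀ x : Plane, ∃ i ∈ I₁, x ∈ C i) ∧ (∀ x : Plane, ∃ i ∈ I₁ᶜ, x ∈ C i)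

/-- The `i`-th side (a closed segment) of the closed polygonal curve with
vertices `v 0, v 1, …, v (n-1)` in cyclic order. -/
def side {n : ℕ} [NeZero n] (v : Fin n → Plane) (i : Fin n) : Set Plane :=
  segment ℝ (v i) (v (i + 1))

/-- `S` is a simple polygon with vertex cycle `v`: it is the closed region
bounded by the closed non-self-intersecting polygonal curve through
`v 0, v 1, …, v (n-1)`. Non-self-intersection is expressed by requiring that
two distinct sides meet only in their common endpoints. The set `S` is the
bounded closed region enclosed by the curve: it is compact, it is the closure
of its interior, and its frontier is exactly the polygonal curve. -/
structure IsSimplePolygon {n : ℕ} [NeZero n] (S : Set Plane) (v : Fin n → Plane) : Prop where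
  three_le : 3 ≤ n
  inj : Function.Injective v
  simple : ∀ i j : Fin n, i ≠ j →
    side v i ∩ side v j ⊆ ({v i, v (i + 1)} ∩ {v j, v (j + 1)} : Set Plane)
  compact : IsCompact S
  regular : S = closure (interior S)
  frontier_eq : frontier S = ⋃ i, side v i

/-!
Suppose that `S` coincides near a vertex `v` with the convex cone spanned by a basis at `v`, and
that some interior point `y` of `S` lies outside this cone. Words over `Fin m` are placed in the
plane so that one of them lies in the translated cone at another one exactly when the latter is a
prefix of it: prefix order is the intersection of two lexicographic orders. For each word `g` and
each letter `a`, take a large copy of `S` with its corner at the point of `g ++ [a]`, the scale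
depending on `g` only. Near the corners the copies look like cones, so the point of a word of length
`m` is covered by the `m` copies along its branch. If the scales grow fast enough, the copies of
scale `s` are the only ones that contain `s • (y - v)`, so there is also a point covered exactly by
the `m` siblings below `g`. In any splitting, a class covering the sibling points contains a whole
branch, and the other class misses the end of that branch. The rest of the plane is covered by small
copies that avoid the points considered, of which words of length at most `m` give finitely many.

Hence, if `S` has no indecomposable covering, the cone at each convex corner contains `S`. An
extreme point of `S` is a vertex; starting there, go around the polygon. At a convex corner the next
side supports `S`, at a straight angle a supporting side passes this on to the next one, and a
reflex corner cannot follow a supporting side. So all sides support `S`, which is therefore convex.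
-/

/-! ### Words and their codes -/

/-- The number in base `m + 1` with the digits `aₖ + 1` after the point, for the word `a₁a₂…` over
the alphabet `Fin m`. It turns the lexicographic order, prefixes first, into the order of `ℝ`. -/
def lexCode {m : ℕ} : List (Fin m) → ℝ
  | [] => 0
  | a :: l => ((a : ℕ) + 1 + lexCode l) / (m + 1)

lemma lexCode_nonneg {m : ℕ} (l : List (Fin m)) : 0 ≤ lexCode l := by
  induction l with
  | nil => exact le_rfl
  | cons a l ih => rw [lexCode]; positivity

lemma lexCode_cons_pos {m : ℕ} (a : Fin m) (l : List (Fin m)) : 0 < lexCode (a :: l) := by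
  have := lexCode_nonneg l
  rw [lexCode]
  positivity

lemma lexCode_lt_one {m : ℕ} (l : List (Fin m)) : lexCode l < 1 := by
  induction l with
  | nil => exact zero_lt_one
  | cons a l ih =>
    have ha : ((a : ℕ) : ℝ) + 1 ≤ m := by exact_mod_cast a.2
    rw [lexCode, div_lt_one (by positivity)]
    linarith

lemma lexCode_cons_le_cons_iff {m : ℕ} {a b : Fin m} {u l : List (Fin m)} :
    lexCode (a :: u) ≤ lexCode (b :: l) ↔ a < b ∨ a = b ∧ lexCode u ≤ lexCode l := by
  rw [lexCode, lexCode, div_le_div_iff_of_pos_right (by positivity)]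
  rcases lt_trichotomy a b with hab | rfl | hab
  · have : ((a : ℕ) : ℝ) + 1 ≤ (b : ℕ) := by exact_mod_cast hab
    simp only [hab, true_or, iff_true]
    linarith [lexCode_lt_one u, lexCode_nonneg l]
  · simp
  · have : ((b : ℕ) : ℝ) + 1 ≤ (a : ℕ) := by exact_mod_cast hab
    simp only [hab.not_gt, hab.ne', false_and, or_self, iff_false, not_le]
    linarith [lexCode_lt_one l, lexCode_nonneg u]

-- At the first difference of two words, neither a prefix of the other, reversing the alphabet
-- reverses their order.
lemma isPrefix_iff_lexCode_le {m : ℕ} {u l : List (Fin m)} :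
    u <+: l ↔ lexCode u ≤ lexCode l ∧ lexCode (u.map Fin.rev) ≤ lexCode (l.map Fin.rev) := by
  induction u generalizing l with
  | nil => simp [lexCode, lexCode_nonneg]
  | cons a u ih =>
    cases l with
    | nil => simp [lexCode.eq_1, lexCode_cons_pos]
    | cons b l =>
      rw [List.cons_prefix_cons, ih, List.map_cons, List.map_cons, lexCode_cons_le_cons_iff,
        lexCode_cons_le_cons_iff, Fin.rev_lt_rev, Fin.rev_inj]
      grind

/-! ### Splitting a family in two -/

/-- The family `C` splits over `A` if its indices can be divided into two classes, each of which
covers `A`. Over the whole plane this is `DecomposableIntoTwoCoverings`. -/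
def SplitsOver {I X : Type*} (C : I → Set X) (A : Set X) : Prop :=
  ∃ I₁ : Set I, (∀ x ∈ A, ∃ i ∈ I₁, x ∈ C i) ∧ ∀ x ∈ A, ∃ i ∈ I₁ᶜ, x ∈ C i

lemma exists_finset_le_card_of_injective {I : Type*} {m : ℕ} {q : I → Prop} {f : Fin m → I}
    (hf : Function.Injective f) (hq : ∀ k, q (f k)) : ∃ t : Finset I, m ≤ t.card ∧ ∀ i ∈ t, q i :=
  ⟨Finset.univ.map ⟨f, hf⟩, by simp, by simpa using hq⟩

lemma exists_word_forall_prefix {α : Type*} {c : List α → α → Prop} {m : ℕ}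
    (h : ∀ g : List α, g.length < m → ∃ a, c g a) :
    ∃ l : List α, l.length = m ∧ ∀ g a, g ++ [a] <+: l → c g a := by
  induction m with
  | zero => exact ⟨[], rfl, by simp⟩
  | succ k ih =>
    obtain ⟨l, hl, hc⟩ := ih fun g hg => h g (by lia)
    obtain ⟨a, ha⟩ := h l (by lia)
    refine ⟨l ++ [a], by simp [hl], fun g b hgb => ?_⟩
    rcases List.prefix_concat_iff.1 hgb with heq | hpre
    · obtain ⟨rfl, rfl⟩ : g = l ∧ b = a := by simpa using heq
      exact ha
    · exact hc g b hpre

/-- The points that stand for the nodes of the tree of words of length at most `m`: `leaf l` for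
a leaf `l`, that is, a word of length `m`, and `fork g` for a shorter word `g`. -/
def treePoints {m : ℕ} {X : Type*} (leaf fork : List (Fin m) → X) : Set X :=
  leaf '' {l | l.length = m} ∪ fork '' {g | g.length < m}

section Tree

variable {m : ℕ} {X : Type*}

lemma treePoints_finite (leaf fork : List (Fin m) → X) : (treePoints leaf fork).Finite :=
  ((List.finite_length_eq (Fin m) m).image _).union ((List.finite_length_lt (Fin m) m).image _)

lemma mFoldCover_treePoints {C : List (Fin m) × Fin m → Set Plane}
    {leaf fork : List (Fin m) → Plane} (hleaf : ∀ l g a, leaf l ∈ C (g, a) ↔ g ++ [a] <+: l)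
    (hfork : ∀ g' g a, fork g' ∈ C (g, a) ↔ g = g') : MFoldCover m C (treePoints leaf fork) := by
  rintro x (⟨l, hl, rfl⟩ | ⟨g, -, rfl⟩)
  · replace hl : l.length = m := hl
    refine exists_finset_le_card_of_injective (f := fun k => (l.take k, l[k])) ?_ fun k => ?_
    · intro k k' h
      have hlen := congrArg (fun i => i.1.length) h
      simp only [List.length_take] at hlen
      exact Fin.ext (by lia)
    · rw [hleaf, Fin.getElem_fin, List.take_concat_get']
      exact List.take_prefix _ _
  · exact exists_finset_le_card_of_injective (f := fun a => (g, a))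
      (fun _ _ h => congrArg Prod.snd h) fun a => (hfork g g a).2 rfl

-- A class that meets every set of siblings contains a whole branch, so the other class misses the
-- leaf at its end.
lemma not_splitsOver_treePoints {C : List (Fin m) × Fin m → Set X}
    {leaf fork : List (Fin m) → X} (hleaf : ∀ l g a, leaf l ∈ C (g, a) ↔ g ++ [a] <+: l)
    (hfork : ∀ g' g a, fork g' ∈ C (g, a) ↔ g = g') : ¬ SplitsOver C (treePoints leaf fork) := by
  rintro ⟨I₁, h₁, h₂⟩
  obtain ⟨l, hl, hbranch⟩ : ∃ l : List (Fin m), l.length = m ∧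
      ∀ g a, g ++ [a] <+: l → (g, a) ∈ I₁ := by
    refine exists_word_forall_prefix fun g hg => ?_
    obtain ⟨⟨g', a⟩, hi, hmem⟩ := h₁ (fork g) (Or.inr ⟨g, hg, rfl⟩)
    obtain rfl := (hfork g g' a).1 hmem
    exact ⟨a, hi⟩
  obtain ⟨⟨g, a⟩, hi, hmem⟩ := h₂ (leaf l) (Or.inl ⟨l, hl, rfl⟩)
  exact hi (hbranch g a ((hleaf l g a).1 hmem))

end Tree

/-! ### Homothetic copies with a prescribed corner -/

/-- The homothetic copy of `S` with factor `s` in which the point `u` corresponds to `v`. -/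
def anchoredCopy (S : Set Plane) (v : Plane) (s : ℝ) (u : Plane) : Set Plane :=
  homCopy s (u - s • v) S

/-- `S` has homothetic copies that form an indecomposable `m`-fold covering of the plane. -/
def HasIndecomposableCover (S : Set Plane) (m : ℕ) : Prop :=
  ∃ (I : Type) (ε : I → ℝ) (p : I → Plane),
    (∀ i, 0 < ε i) ∧
    MFoldCover m (fun i => homCopy (ε i) (p i) S) Set.univ ∧
    ¬ DecomposableIntoTwoCoverings (fun i => homCopy (ε i) (p i) S)

section AnchoredCopy

variable {S : Set Plane} {v u x : Plane} {s r : ℝ}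

lemma mem_anchoredCopy_iff (hs : 0 < s) :
    x ∈ anchoredCopy S v s u ↔ v + s⁻¹ • (x - u) ∈ S := by
  have hinv : ∀ z, s • z + (u - s • v) = x ↔ z = v + s⁻¹ • (x - u) := fun z => by
    rw [← sub_eq_iff_eq_add', eq_inv_smul_iff₀ hs.ne', smul_sub, eq_sub_iff_add_eq,
      ← add_sub_assoc, sub_add_eq_add_sub]
  simp [anchoredCopy, homCopy, hinv]

lemma norm_inv_smul_sub (hs : 0 < s) : ‖s⁻¹ • (x - u)‖ = dist x u / s := by
  rw [norm_smul, norm_inv, Real.norm_of_nonneg hs.le, dist_eq_norm, inv_mul_eq_div]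

lemma dist_le_of_mem_anchoredCopy (hs : 0 < s) (hr : ∀ y ∈ S, dist y v ≤ r)
    (hx : x ∈ anchoredCopy S v s u) : dist x u ≤ s * r := by
  have := hr _ ((mem_anchoredCopy_iff hs).1 hx)
  rwa [dist_self_add_left, norm_inv_smul_sub hs, div_le_iff₀' hs] at this

lemma self_mem_anchoredCopy (hv : v ∈ S) (hs : 0 < s) : u ∈ anchoredCopy S v s u := by
  simpa [mem_anchoredCopy_iff hs] using hv

lemma exists_anchoredCopy_disjoint (hS : Bornology.IsBounded S) {P : Set Plane}
    (hP : IsClosed P) (hu : u ∉ P) : ∃ s, 0 < s ∧ Disjoint (anchoredCopy S v s u) P := by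
  obtain ⟨η, hη, hball⟩ := Metric.isOpen_iff.1 hP.isOpen_compl u hu
  obtain ⟨R, hR, hSR⟩ := hS.subset_closedBall_lt 0 v
  have hs : 0 < η / (2 * R) := by positivity
  refine ⟨_, hs, Set.disjoint_left.2 fun x hx => hball ?_⟩
  calc dist x u ≤ η / (2 * R) * R := dist_le_of_mem_anchoredCopy hs hSR hx
    _ = η / 2 := by field_simp
    _ < η := half_lt_self hη

-- The remaining points are covered by copies that avoid `P`.
lemma HasIndecomposableCover.of_not_splitsOver {m : ℕ} (hS : Bornology.IsBounded S)
    (hv : v ∈ S) {P : Set Plane} (hP : IsClosed P) {J : Type} {t : J → ℝ} {w : J → Plane}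
    (ht : ∀ j, 0 < t j) (hcover : MFoldCover m (fun j => anchoredCopy S v (t j) (w j)) P)
    (hsplit : ¬ SplitsOver (fun j => anchoredCopy S v (t j) (w j)) P) :
    HasIndecomposableCover S m := by
  choose! e he hdisj using fun x (hx : x ∉ P) =>
    exists_anchoredCopy_disjoint (v := v) hS hP hx
  let ε : J ⊕ (↥Pᶜ × Fin m) → ℝ := Sum.elim t fun i => e i.1
  let c : J ⊕ (↥Pᶜ × Fin m) → Plane := Sum.elim w fun i => i.1
  have hnew : ∀ x ∈ P, ∀ i, x ∉ anchoredCopy S v (ε (.inr i)) (c (.inr i)) := fun x hx i =>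
    Set.disjoint_right.1 (hdisj _ i.1.2) hx
  refine ⟨_, ε, fun i => c i - ε i • v, ?_, fun x _ => ?_, ?_⟩
  · rintro (j | i)
    exacts [ht j, he _ i.1.2]
  · by_cases hx : x ∈ P
    · obtain ⟨T, hT, hxT⟩ := hcover x hx
      refine ⟨T.map .inl, by simpa using hT, fun i hi => ?_⟩
      obtain ⟨j, hj, rfl⟩ := Finset.mem_map.1 hi
      exact hxT j hj
    · exact exists_finset_le_card_of_injective (f := fun k => .inr (⟨x, hx⟩, k))
        (fun _ _ h => congrArg Prod.snd (Sum.inr_injective h))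
        fun k => self_mem_anchoredCopy hv (he x hx)
  · rintro ⟨I₁, h₁, h₂⟩
    refine hsplit ⟨Sum.inl ⁻¹' I₁, fun x hx => ?_, fun x hx => ?_⟩
    · obtain ⟨j | i, hi, hmem⟩ := h₁ x
      exacts [⟨j, hi, hmem⟩, absurd hmem (hnew x hx i)]
    · obtain ⟨j | i, hi, hmem⟩ := h₂ x
      exacts [⟨j, hi, hmem⟩, absurd hmem (hnew x hx i)]

end AnchoredCopy

/-! ### Cones over a basis -/

section Corner

variable {ι E : Type*} [AddCommGroup E] [Module ℝ E]
  {b : Module.Basis ι ℝ E} {v w x : E}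

/-- The convex cone with apex `v` spanned by the basis `b`: the points with nonnegative coordinates
in the affine frame `(v, b)`. -/
def corner (b : Module.Basis ι ℝ E) (v : E) : Set E :=
  {x | ∀ i, 0 ≤ b.coord i (x - v)}

lemma apex_mem_corner (b : Module.Basis ι ℝ E) (v : E) : v ∈ corner b v := by
  simp [corner]

lemma corner_subset_corner (h : v ∈ corner b w) : corner b v ⊆ corner b w := fun x hx i => by
  have := add_nonneg (hx i) (h i)
  rwa [← map_add, sub_add_sub_cancel] at this

lemma smul_mem_corner_zero_iff {t : ℝ} (ht : 0 < t) : t • x ∈ corner b 0 ↔ x ∈ corner b 0 := by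
  simp [corner, mul_nonneg_iff_of_pos_left ht]

lemma sub_mem_corner_zero_iff : x - v ∈ corner b 0 ↔ x ∈ corner b v := by
  simp [corner]

lemma add_mem_corner_add_iff {t : ℝ} (ht : 0 < t) :
    v + t⁻¹ • (x - w) ∈ corner b v ↔ x ∈ corner b w := by
  rw [← sub_mem_corner_zero_iff, add_sub_cancel_left, smul_mem_corner_zero_iff (inv_pos.2 ht),
    sub_mem_corner_zero_iff]

lemma convex_corner (b : Module.Basis ι ℝ E) (v : E) : Convex ℝ (corner b v) := by
  simp only [corner, map_sub, sub_nonneg, Set.ofPred_forall]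
  exact convex_iInter fun i => convex_halfSpace_ge (b.coord i).isLinear _

lemma add_smul_sub_notMem_corner {i j : ι} (hij : i ≠ j) {t : ℝ} (ht : t ≠ 0) :
    v + t • (b i - b j) ∉ corner b v := fun h => by
  have hi : 0 ≤ t := by simpa [hij, hij.symm] using h i
  have hj : t ≤ 0 := by simpa [hij, hij.symm] using h j
  exact ht (le_antisymm hj hi)

end Corner

section CornerTopology

variable {ι E : Type*} [Finite ι] [NormedAddCommGroup E] [NormedSpace ℝ E]
  {b : Module.Basis ι ℝ E} {v : E}

lemma continuous_coord (b : Module.Basis ι ℝ E) (i : ι) : Continuous (b.coord i) :=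
  have := b.finiteDimensional_of_finite
  (b.coord i).continuous_of_finiteDimensional

lemma isClosed_corner (b : Module.Basis ι ℝ E) (v : E) : IsClosed (corner b v) := by
  simp only [corner, Set.ofPred_forall]
  exact isClosed_iInter fun i =>
    isClosed_le continuous_const ((continuous_coord b i).comp (continuous_sub_right v))

lemma interior_corner (b : Module.Basis ι ℝ E) (v : E) :
    interior (corner b v) = {x | ∀ i, 0 < b.coord i (x - v)} := by
  have := b.finiteDimensional_of_finite
  have hpre : corner b v = (Homeomorph.subRight v).trans b.equivFunL.toHomeomorph ⁻¹'
      Set.univ.pi fun _ => Set.Ici 0 := by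
    ext x; simp [corner, Pi.le_def]
  rw [hpre, ← Homeomorph.preimage_interior, interior_pi_set Set.finite_univ]
  ext x; simp

lemma closure_interior_corner (b : Module.Basis ι ℝ E) (v : E) :
    closure (interior (corner b v)) = corner b v := by
  cases nonempty_fintype ι
  have hne : (interior (corner b v)).Nonempty :=
    ⟨v + ∑ j, b j, by simp [interior_corner]⟩
  rw [(convex_corner b v).closure_interior_eq_closure_of_nonempty_interior hne,
    (isClosed_corner b v).closure_eq]

lemma mem_frontier_corner {x : E} (hx : x ∈ corner b v) {i : ι} (hi : b.coord i (x - v) = 0) :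
    x ∈ frontier (corner b v) := by
  rw [(isClosed_corner b v).frontier_eq, interior_corner]
  exact ⟨hx, fun h => (h i).ne' hi⟩

-- The complement of the cone is a union of open half-spaces, which have the points
-- `v - t • ∑ j, b j`, `t > 0`, in common.
lemma isPreconnected_ball_diff_corner (b : Module.Basis ι ℝ E) (v : E) {r : ℝ} (hr : 0 < r) :
    IsPreconnected (Metric.ball v r \ corner b v) := by
  cases nonempty_fintype ι
  have hunion : Metric.ball v r \ corner b v =
      ⋃ i, Metric.ball v r ∩ {x | b.coord i x < b.coord i v} := by
    ext x; simp [corner]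
  obtain ⟨t, ht, htr⟩ : ∃ t > (0 : ℝ), v - t • ∑ j, b j ∈ Metric.ball v r := by
    have hcont : Continuous fun t : ℝ => v - t • ∑ j, b j := by fun_prop
    have hlim := (hcont.tendsto' 0 v (by simp)).mono_left (nhdsWithin_le_nhds (s := Set.Ioi 0))
    exact ((eventually_mem_nhdsWithin).and (hlim.eventually (Metric.ball_mem_nhds v hr))).exists
  rw [hunion]
  refine isPreconnected_iUnion ⟨_, Set.mem_iInter.2 fun i => ⟨htr, ?_⟩⟩ fun i =>
    ((convex_ball v r).inter (convex_halfSpace_lt (b.coord i).isLinear _)).isPreconnected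
  simpa using ht

end CornerTopology

/-! ### Connected sets and frontiers -/

section Frontier

variable {X : Type*} [TopologicalSpace X] {S C K U : Set X}

lemma subset_of_isPreconnected_of_disjoint_frontier (hC : IsPreconnected C)
    (hd : Disjoint C (frontier S)) (hne : (C ∩ S).Nonempty) : C ⊆ S := by
  have hsplit : C ⊆ interior S ∪ (closure S)ᶜ := fun x hx => by
    by_contra h
    rw [Set.mem_union, not_or, Set.notMem_compl_iff] at h
    exact Set.disjoint_left.1 hd hx ⟨h.2, h.1⟩
  obtain ⟨y, hy, hyS⟩ := hne
  refine (hC.subset_left_of_subset_union isOpen_interior isClosed_closure.isOpen_compl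
    (disjoint_compl_right.mono_left interior_subset_closure) hsplit ⟨y, hy, ?_⟩).trans
    interior_subset
  exact (hsplit hy).resolve_right fun h => h (subset_closure hyS)

lemma diff_subset_or_inter_eq_inter_of_frontier_subset (hS : closure (interior S) = S)
    (hK : closure (interior K) = K) (hU : IsOpen U) (hUS : (U ∩ S).Nonempty)
    (hin : IsPreconnected (U ∩ interior K)) (hout : IsPreconnected (U \ K))
    (hfr : U ∩ frontier S ⊆ frontier K) : U \ K ⊆ S ∨ U ∩ S = U ∩ K := by
  have hKcl : IsClosed K := hK ▸ isClosed_closure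
  have hScl : IsClosed S := hS ▸ isClosed_closure
  by_cases hne : (U \ K ∩ S).Nonempty
  · refine .inl (subset_of_isPreconnected_of_disjoint_frontier hout ?_ hne)
    exact Set.disjoint_left.2 fun x hx hxf => hx.2 (hKcl.frontier_subset (hfr ⟨hx.1, hxf⟩))
  have hSK : U ∩ S ⊆ K := fun x hx => by_contra fun hxK => hne ⟨x, ⟨hx.1, hxK⟩, hx.2⟩
  obtain ⟨x, hxU, hxS⟩ : (U ∩ interior S).Nonempty := by
    rwa [Set.inter_comm, ← closure_inter_open_nonempty_iff hU, hS, Set.inter_comm]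
  have hxK : x ∈ interior K :=
    interior_maximal ((Set.inter_subset_inter_right U interior_subset).trans hSK)
      (hU.inter isOpen_interior) ⟨hxU, hxS⟩
  have hKS : U ∩ interior K ⊆ S := by
    refine subset_of_isPreconnected_of_disjoint_frontier hin ?_
      ⟨x, ⟨hxU, hxK⟩, interior_subset hxS⟩
    exact Set.disjoint_left.2 fun y hy hyf => (hfr ⟨hy.1, hyf⟩).2 hy.2
  refine .inr (Set.Subset.antisymm (fun y hy => ⟨hy.1, hSK hy⟩) fun y hy => ⟨hy.1, ?_⟩)
  rw [← hK] at hy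
  exact closure_minimal hKS hScl (hU.inter_closure hy)

end Frontier

section SupportingHyperplanes

variable {E : Type*} [NormedAddCommGroup E] [NormedSpace ℝ E]

lemma lt_of_mem_interior_of_forall_le {S : Set E} {f : E →L[ℝ] ℝ} (hf : f ≠ 0) {c : ℝ}
    (hc : ∀ y ∈ S, c ≤ f y) {x : E} (hx : x ∈ interior S) : c < f x := by
  have hopen : IsOpen (f '' interior S) := f.isOpenMap_of_ne_zero hf _ isOpen_interior
  have hsub : f '' interior S ⊆ Set.Ici c :=
    Set.image_subset_iff.2 fun y hy => hc y (interior_subset hy)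
  have := interior_maximal hsub hopen ⟨x, hx, rfl⟩
  rwa [interior_Ici] at this

-- A segment from an interior point to a point of the convex hull can only leave `S` at a frontier
-- point, and the supporting functional there would decrease strictly up to that point, but not
-- beyond it.
theorem convex_of_forall_frontier_exists_supporting {S : Set E} (hS : IsClosed S)
    (hne : (interior S).Nonempty)
    (hsupp : ∀ x ∈ frontier S, ∃ f : E →L[ℝ] ℝ, f ≠ 0 ∧ ∀ y ∈ S, f x ≤ f y) : Convex ℝ S := by
  obtain ⟨s, hs⟩ := hne
  refine convex_iff_segment_subset.2 fun a ha c hc z hz => ?_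
  by_contra hzS
  obtain ⟨y, hysz, hyf⟩ : (segment ℝ s z ∩ frontier S).Nonempty := by
    by_contra hempty
    exact hzS (subset_of_isPreconnected_of_disjoint_frontier (convex_segment s z).isPreconnected
      (Set.disjoint_iff_inter_eq_empty.2 (Set.not_nonempty_iff_eq_empty.1 hempty))
      ⟨s, left_mem_segment ℝ s z, interior_subset hs⟩ (right_mem_segment ℝ s z))
  obtain ⟨f, hf, hfy⟩ := hsupp y hyf
  have hys : f y < f s := lt_of_mem_interior_of_forall_le hf hfy hs
  have hyz : f y ≤ f z :=
    (convex_halfSpace_ge f.isLinear (f y)).segment_subset (hfy a ha) (hfy c hc) hz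
  have hyz_ne : y ≠ z := fun h => hzS (h ▸ hS.frontier_subset hyf)
  have hys_ne : y ≠ s := fun h => hys.ne (congrArg f h)
  obtain ⟨t, t', ht, ht', htt, rfl⟩ :=
    mem_openSegment_of_ne_left_right hys_ne.symm hyz_ne.symm hysz
  simp only [map_add, map_smul, smul_eq_mul] at hys hyz
  obtain rfl : t' = 1 - t := by linarith
  nlinarith

end SupportingHyperplanes

section CornerDichotomy

variable {ι E : Type*} [NormedAddCommGroup E] [NormedSpace ℝ E]
  {b : Module.Basis ι ℝ E} {v : E} {S : Set E}

lemma eventuallyEq_corner_or_compl_corner_eventuallyLE [Finite ι]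
    (hreg : closure (interior S) = S) (hv : v ∈ S)
    (hfr : frontier S ≤ᶠ[nhds v] frontier (corner b v)) :
    S =ᶠ[nhds v] corner b v ∨ (corner b v)ᶜ ≤ᶠ[nhds v] S := by
  obtain ⟨r, hr, hball⟩ := Metric.eventually_nhds_iff_ball.1 hfr
  have hmem : Metric.ball v r ∈ nhds v := Metric.ball_mem_nhds v hr
  rcases diff_subset_or_inter_eq_inter_of_frontier_subset hreg (closure_interior_corner b v)
    Metric.isOpen_ball ⟨v, Metric.mem_ball_self hr, hv⟩
    ((convex_ball v r).inter (convex_corner b v).interior).isPreconnected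
    (isPreconnected_ball_diff_corner b v hr) (fun x hx => hball x hx.1 hx.2) with hout | heq
  · exact .inr (Filter.mem_of_superset hmem fun x hx hxK => hout ⟨hx, hxK⟩)
  · refine .inl (Filter.eventuallyEq_set.2 (Filter.mem_of_superset hmem fun x hx => ?_))
    simpa [hx] using Set.ext_iff.1 heq x

lemma exists_add_sub_mem_of_compl_corner_eventuallyLE (h : (corner b v)ᶜ ≤ᶠ[nhds v] S) {i j : ι}
    (hij : i ≠ j) : ∃ t > (0 : ℝ), v + t • (b i - b j) ∈ S ∧ v - t • (b i - b j) ∈ S := by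
  have hadd : Filter.Tendsto (fun t : ℝ => v + t • (b i - b j)) (nhdsWithin 0 (Set.Ioi 0))
      (nhds v) :=
    (Continuous.tendsto' (by fun_prop) 0 v (by simp)).mono_left nhdsWithin_le_nhds
  have hsub : Filter.Tendsto (fun t : ℝ => v - t • (b i - b j)) (nhdsWithin 0 (Set.Ioi 0))
      (nhds v) :=
    (Continuous.tendsto' (by fun_prop) 0 v (by simp)).mono_left nhdsWithin_le_nhds
  obtain ⟨t, ⟨haddS, hsubS⟩, ht : 0 < t⟩ :=
    (((hadd.eventually h).and (hsub.eventually h)).and eventually_mem_nhdsWithin).exists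
  refine ⟨t, ht, haddS (add_smul_sub_notMem_corner hij ht.ne'), hsubS ?_⟩
  rw [sub_eq_add_neg, ← neg_smul]
  exact add_smul_sub_notMem_corner hij (neg_ne_zero.2 ht.ne')

lemma notMem_extremePoints_of_compl_corner_eventuallyLE (h : (corner b v)ᶜ ≤ᶠ[nhds v] S) {i j : ι}
    (hij : i ≠ j) : v ∉ S.extremePoints ℝ := fun hv => by
  obtain ⟨t, ht, hadd, hsub⟩ := exists_add_sub_mem_of_compl_corner_eventuallyLE h hij
  have hmid : v ∈ openSegment ℝ (v + t • (b i - b j)) (v - t • (b i - b j)) :=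
    ⟨1 / 2, 1 / 2, by norm_num, by norm_num, by norm_num, by module⟩
  have heq := (mem_extremePoints_iff_left.1 hv).2 _ hadd _ hsub hmid
  rw [add_eq_left, smul_eq_zero_iff_right ht.ne', sub_eq_zero] at heq
  exact hij (b.injective heq)

lemma eq_zero_of_compl_corner_eventuallyLE (h : (corner b v)ᶜ ≤ᶠ[nhds v] S) {f : E →L[ℝ] ℝ}
    (hf : ∀ x ∈ S, f v ≤ f x) {i : ι} (hi : f (b i) = 0) : f = 0 := by
  refine ContinuousLinearMap.coe_injective (b.ext fun j => ?_)
  obtain rfl | hij := eq_or_ne i j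
  · exact hi
  obtain ⟨t, ht, hadd, hsub⟩ := exists_add_sub_mem_of_compl_corner_eventuallyLE h hij
  have hle := hf _ hadd
  have hge := hf _ hsub
  simp only [map_add, map_sub, map_smul, smul_eq_mul, hi] at hle hge
  change f (b j) = 0
  nlinarith

end CornerDichotomy

/-! ### The tree of copies at a corner -/

section WordPoint

variable {m : ℕ} {E : Type*} [AddCommGroup E] [Module ℝ E]

/-- The point of the parallelogram spanned by `b` that stands for a word: its coordinates are the
codes of the word over the alphabet `Fin m` and over the reversed alphabet. -/
def wordPoint (b : Module.Basis (Fin 2) ℝ E) (l : List (Fin m)) : E :=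
  lexCode l • b 0 + lexCode (l.map Fin.rev) • b 1

lemma wordPoint_mem_corner_iff {b : Module.Basis (Fin 2) ℝ E} {l g : List (Fin m)} :
    wordPoint b l ∈ corner b (wordPoint b g) ↔ g <+: l := by
  simp [corner, wordPoint, isPrefix_iff_lexCode_le]

lemma wordPoint_mem_corner_zero (b : Module.Basis (Fin 2) ℝ E) (l : List (Fin m)) :
    wordPoint b l ∈ corner b 0 := by
  simp [corner, wordPoint, lexCode_nonneg]

lemma norm_wordPoint_le {F : Type*} [NormedAddCommGroup F] [NormedSpace ℝ F]
    (b : Module.Basis (Fin 2) ℝ F) (l : List (Fin m)) : ‖wordPoint b l‖ ≤ ‖b 0‖ + ‖b 1‖ := by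
  refine norm_add_le_of_le ?_ ?_ <;> rw [norm_smul, Real.norm_of_nonneg (lexCode_nonneg _)] <;>
    exact mul_le_of_le_one_left (norm_nonneg _) (lexCode_lt_one _).le

end WordPoint

section CornerCopies

variable {S : Set Plane} {v y u x : Plane} {b : Module.Basis (Fin 2) ℝ Plane}
  {r R D K s t : ℝ}

lemma mem_anchoredCopy_iff_mem_corner (hloc : ∀ z ∈ Metric.ball v r, z ∈ S ↔ z ∈ corner b v)
    (hs : 0 < s) (hx : dist x u < s * r) :
    x ∈ anchoredCopy S v s u ↔ x ∈ corner b u := by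
  have hball : v + s⁻¹ • (x - u) ∈ Metric.ball v r := by
    rwa [Metric.mem_ball, dist_self_add_left, norm_inv_smul_sub hs, div_lt_iff₀' hs]
  rw [mem_anchoredCopy_iff hs, hloc _ hball, add_mem_corner_add_iff hs]

lemma smul_sub_mem_anchoredCopy (hball : Metric.ball y r ⊆ S) (hs : 0 < s) (hu : ‖u‖ < s * r) :
    s • (y - v) ∈ anchoredCopy S v s u := by
  rw [mem_anchoredCopy_iff hs]
  refine hball ?_
  have hsub : v + s⁻¹ • (s • (y - v) - u) = y - s⁻¹ • u := by
    rw [smul_sub, inv_smul_smul₀ hs.ne']; abel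
  rw [hsub, mem_ball_iff_norm, sub_sub_cancel_left, norm_neg, norm_smul, norm_inv,
    Real.norm_of_nonneg hs.le, inv_mul_lt_iff₀ hs]
  exact hu

lemma smul_sub_notMem_anchoredCopy_of_mul_le (hR : ∀ z ∈ S, dist z v ≤ R) (hs : 1 ≤ s)
    (hst : K * s ≤ t) (hu : ‖u‖ ≤ D) (hK : R + D < K * ‖y - v‖) :
    t • (y - v) ∉ anchoredCopy S v s u := fun hmem => by
  have hs0 : 0 < s := by linarith
  have hdist := dist_le_of_mem_anchoredCopy hs0 hR hmem
  have ht : K * s * ‖y - v‖ ≤ ‖t • (y - v)‖ := by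
    rw [norm_smul]
    exact mul_le_mul_of_nonneg_right (hst.trans (le_abs_self t)) (norm_nonneg _)
  have htri : ‖t • (y - v)‖ - ‖u‖ ≤ dist (t • (y - v)) u := by
    rw [dist_eq_norm]; exact norm_sub_norm_le _ _
  nlinarith [norm_nonneg u]

lemma smul_sub_notMem_anchoredCopy_of_le_mul
    (hloc : ∀ z ∈ Metric.ball v r, z ∈ S ↔ z ∈ corner b v) (hr : 0 < r) (hy : y ∉ corner b v)
    (ht : 1 ≤ t) (hts : K * t ≤ s) (hs : 0 < s) (hu : ‖u‖ ≤ D) (hu0 : u ∈ corner b 0)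
    (hK : ‖y - v‖ + D < K * r) : t • (y - v) ∉ anchoredCopy S v s u := fun hmem => by
  have ht0 : 0 < t := by linarith
  have hdist : dist (t • (y - v)) u < s * r := by
    calc dist (t • (y - v)) u ≤ ‖t • (y - v)‖ + ‖u‖ := by rw [dist_eq_norm]; exact norm_sub_le _ _
      _ = t * ‖y - v‖ + ‖u‖ := by rw [norm_smul, Real.norm_of_nonneg ht0.le]
      _ ≤ t * (‖y - v‖ + D) := by nlinarith [norm_nonneg u]
      _ < t * (K * r) := by gcongr
      _ = K * t * r := by ring
      _ ≤ s * r := by gcongr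
  have hcorner : t • (y - v) ∈ corner b 0 :=
    corner_subset_corner hu0 ((mem_anchoredCopy_iff_mem_corner hloc hs hdist).1 hmem)
  exact hy (sub_mem_corner_zero_iff.1 ((smul_mem_corner_zero_iff ht0).1 hcorner))

-- Near the corners, all copies look like translates of the cone. Along the ray from the corner
-- through the interior point `y` outside the cone, rapidly growing scales separate them.
lemma exists_scales_of_corner (hS : Bornology.IsBounded S) (hcorner : S =ᶠ[nhds v] corner b v)
    (hyS : y ∈ interior S) (hy : y ∉ corner b v) (m : ℕ) :
    ∃ s : List (Fin m) → ℝ, (∀ g, 0 < s g) ∧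
      (∀ l g a, wordPoint b l ∈ anchoredCopy S v (s g) (wordPoint b (g ++ [a])) ↔ g ++ [a] <+: l) ∧
      ∀ g' g a, s g' • (y - v) ∈ anchoredCopy S v (s g) (wordPoint b (g ++ [a])) ↔ g = g' := by
  obtain ⟨r, hr, hloc⟩ := Metric.eventually_nhds_iff_ball.1 (Filter.eventuallyEq_set.1 hcorner)
  obtain ⟨ρ, hρ, hball⟩ := Metric.isOpen_iff.1 isOpen_interior y hyS
  obtain ⟨R, hR⟩ := hS.subset_closedBall v
  have hyv : 0 < ‖y - v‖ :=
    norm_pos_iff.2 (sub_ne_zero.2 fun h => hy (h ▸ apex_mem_corner b v))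
  set D := ‖b 0‖ + ‖b 1‖
  have hwp : ∀ l : List (Fin m), ‖wordPoint b l‖ ≤ D := norm_wordPoint_le b
  obtain ⟨K, hK1, hKR, hKy, hKD, hKρ⟩ : ∃ K : ℝ, 1 ≤ K ∧ R + D < K * ‖y - v‖ ∧
      ‖y - v‖ + D < K * r ∧ D + D < K * r ∧ D < K * ρ := by
    have hlarge : ∀ c {d : ℝ}, 0 < d → ∀ᶠ K in Filter.atTop, c < K * d := fun c d hd =>
      (Filter.tendsto_id.atTop_mul_const hd).eventually_gt_atTop c
    exact ((Filter.eventually_ge_atTop 1).and ((hlarge _ hyv).and ((hlarge _ hr).and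
      ((hlarge _ hr).and (hlarge _ hρ))))).exists
  let s : List (Fin m) → ℝ := fun g => K ^ (Encodable.encode g + 1)
  have hKs : ∀ g, K ≤ s g := fun g => le_self_pow₀ hK1 (Nat.succ_ne_zero _)
  have hs1 : ∀ g, 1 ≤ s g := fun g => hK1.trans (hKs g)
  have hs0 : ∀ g, 0 < s g := fun g => zero_lt_one.trans_le (hs1 g)
  have hratio : ∀ {g g'}, Encodable.encode g < Encodable.encode g' → K * s g ≤ s g' := fun h => by
    rw [← pow_succ']
    exact pow_le_pow_right₀ hK1 (Nat.succ_le_succ h)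
  refine ⟨s, hs0, fun l g a => ?_, fun g' g a => ⟨fun hmem => ?_, ?_⟩⟩
  · have hdist : dist (wordPoint b l) (wordPoint b (g ++ [a])) < s g * r := by
      calc dist (wordPoint b l) (wordPoint b (g ++ [a])) ≤ D + D :=
            (dist_le_norm_add_norm _ _).trans (add_le_add (hwp l) (hwp _))
        _ < K * r := hKD
        _ ≤ s g * r := by gcongr; exact hKs g
    rw [mem_anchoredCopy_iff_mem_corner hloc (hs0 g) hdist, wordPoint_mem_corner_iff]
  · rcases lt_trichotomy (Encodable.encode g) (Encodable.encode g') with h | h | h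
    · exact absurd hmem
        (smul_sub_notMem_anchoredCopy_of_mul_le hR (hs1 g) (hratio h) (hwp _) hKR)
    · exact Encodable.encode_injective h
    · exact absurd hmem (smul_sub_notMem_anchoredCopy_of_le_mul hloc hr hy (hs1 g') (hratio h)
        (hs0 g) (hwp _) (wordPoint_mem_corner_zero b _) hKy)
  · rintro rfl
    refine smul_sub_mem_anchoredCopy (hball.trans interior_subset) (hs0 g) ?_
    calc ‖wordPoint b (g ++ [a])‖ ≤ D := hwp _
      _ < K * ρ := hKρ
      _ ≤ s g * ρ := by gcongr; exact hKs g

theorem hasIndecomposableCover_of_corner (hS : Bornology.IsBounded S)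
    (hcorner : S =ᶠ[nhds v] corner b v) (hnot : ¬ interior S ⊆ corner b v) (m : ℕ) :
    HasIndecomposableCover S m := by
  obtain ⟨y, hyS, hy⟩ := Set.not_subset.1 hnot
  obtain ⟨s, hs, hleaf, hfork⟩ := exists_scales_of_corner hS hcorner hyS hy m
  have hv : v ∈ S := (Filter.eventuallyEq_set.1 hcorner).self_of_nhds.2 (apex_mem_corner b v)
  let leaf : List (Fin m) → Plane := wordPoint b
  let fork : List (Fin m) → Plane := fun g => s g • (y - v)
  exact .of_not_splitsOver hS hv (treePoints_finite leaf fork).isClosed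
    (t := fun i : List (Fin m) × Fin m => s i.1) (w := fun i => wordPoint b (i.1 ++ [i.2]))
    (fun i => hs i.1) (mFoldCover_treePoints hleaf hfork) (not_splitsOver_treePoints hleaf hfork)

end CornerCopies

/-! ### Polygons -/

lemma notMem_extremePoints_of_wbtw {E : Type*} [AddCommGroup E] [Module ℝ E] {S : Set E}
    {x y z : E} (h : Wbtw ℝ x y z) (hx : x ∈ S) (hz : z ∈ S) (hxy : x ≠ y) (hyz : y ≠ z) :
    y ∉ S.extremePoints ℝ := fun hy =>
  hxy ((mem_extremePoints_iff_left.1 hy).2 x hx z hz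
    (mem_openSegment_of_ne_left_right hxy hyz.symm (mem_segment_iff_wbtw.2 h)))

lemma wbtw_or_wbtw_or_wbtw_or_linearIndependent {E : Type*} [AddCommGroup E] [Module ℝ E]
    (x y z : E) :
    Wbtw ℝ x y z ∨ Wbtw ℝ y x z ∨ Wbtw ℝ y z x ∨ LinearIndependent ℝ ![x - y, z - y] := by
  by_cases hli : LinearIndependent ℝ ![x - y, z - y]
  · exact .inr (.inr (.inr hli))
  rcases sameRay_or_sameRay_neg_iff_not_linearIndependent.2 hli with h | h
  · exact (wbtw_total_of_sameRay_vsub_left h).elim (fun h => .inr (.inl h))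
      fun h => .inr (.inr (.inl h))
  · refine .inl (wbtw_iff_sameRay_vsub.2 ?_)
    rwa [vsub_eq_sub, vsub_eq_sub, ← sameRay_neg_iff, neg_sub]

lemma forall_of_add_one {n : ℕ} [NeZero n] {P : Fin n → Prop} (i₀ : Fin n) (h₀ : P i₀)
    (hstep : ∀ i, P i → P (i + 1)) (i : Fin n) : P i := by
  have hadd : ∀ k : ℕ, P (i₀ + Fin.ofNat n k) := fun k => by
    induction k with
    | zero => simpa using h₀
    | succ k ih =>
      have := hstep _ ih
      rwa [add_assoc, show Fin.ofNat n k + 1 = Fin.ofNat n (k + 1) by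
        simp [Fin.ext_iff, Fin.val_add]] at this
  simpa using hadd (i - i₀).val

/-- The line through the side `v i v (i + 1)` supports `S`: it is a level line of a nonzero linear
functional whose minimum on `S` is attained there. -/
def SideSupports {n : ℕ} [NeZero n] (S : Set Plane) (v : Fin n → Plane) (i : Fin n) : Prop :=
  ∃ f : Plane →L[ℝ] ℝ, f ≠ 0 ∧ f (v (i + 1)) = f (v i) ∧ ∀ x ∈ S, f (v i) ≤ f x

section SideSupports

variable {n : ℕ} [NeZero n] {S : Set Plane} {v : Fin n → Plane} {i : Fin n}

lemma SideSupports.of_subset_corner {b : Module.Basis (Fin 2) ℝ Plane} (hS : S ⊆ corner b (v i))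
    {j : Fin 2} (hj : b j = v (i + 1) - v i) : SideSupports S v i := by
  obtain ⟨k, hkj⟩ := exists_ne j
  refine ⟨LinearMap.toContinuousLinearMap (b.coord k), fun h => ?_, ?_, fun x hx => ?_⟩
  · simpa using DFunLike.congr_fun h (b k)
  · rw [← sub_eq_zero, ← map_sub, ← hj]
    simp [hkj.symm]
  · rw [← sub_nonneg, ← map_sub]
    exact hS hx k

lemma SideSupports.add_one_of_wbtw (hi : SideSupports S v i) (hne : v i ≠ v (i + 1))
    (hflat : Wbtw ℝ (v i) (v (i + 1)) (v (i + 1 + 1))) : SideSupports S v (i + 1) := by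
  obtain ⟨f, hf, hfi, hfS⟩ := hi
  refine ⟨f, hf, ?_, hfi.symm ▸ hfS⟩
  obtain ⟨c, -, hc⟩ := hflat
  have hc0 : c ≠ 0 := by rintro rfl; exact hne (by simpa using hc)
  have hfc := congrArg f hc
  simp only [AffineMap.lineMap_apply_module', map_add, map_smul, map_sub, smul_eq_mul, hfi,
    add_eq_right, mul_eq_zero, hc0, false_or] at hfc
  rw [hfi]; linarith

end SideSupports

namespace IsSimplePolygon

variable {n : ℕ} [NeZero n] {S : Set Plane} {v : Fin n → Plane}

lemma ne_add_one (h : IsSimplePolygon S v) (i : Fin n) : i ≠ i + 1 := by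
  have := h.three_le
  rw [ne_comm, Ne, add_eq_left, Fin.ext_iff]
  simp [Nat.mod_eq_of_lt (show 1 < n by lia)]

lemma ne_add_one_add_one (h : IsSimplePolygon S v) (i : Fin n) : i ≠ i + 1 + 1 := by
  have := h.three_le
  rw [ne_comm, Ne, add_assoc, add_eq_left, Fin.ext_iff]
  simp [Fin.val_add, Nat.mod_eq_of_lt (show 2 < n by lia)]

lemma eq_or_eq_of_vertex_mem_side (h : IsSimplePolygon S v) {i j : Fin n} (hj : v j ∈ side v i) :
    j = i ∨ j = i + 1 := by
  by_cases hij : i = j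
  · exact .inl hij.symm
  · exact (h.simple i j hij ⟨hj, left_mem_segment ℝ _ _⟩).1.imp (fun he => h.inj he)
      fun he => h.inj he

lemma side_subset (h : IsSimplePolygon S v) (i : Fin n) : side v i ⊆ S := fun _ hx =>
  h.compact.isClosed.frontier_subset (h.frontier_eq ▸ Set.mem_iUnion_of_mem i hx)

lemma vertex_mem (h : IsSimplePolygon S v) (i : Fin n) : v i ∈ S :=
  h.side_subset i (left_mem_segment ℝ _ _)

lemma wbtw_or_linearIndependent (h : IsSimplePolygon S v) (i : Fin n) :
    Wbtw ℝ (v i) (v (i + 1)) (v (i + 1 + 1)) ∨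
      LinearIndependent ℝ ![v i - v (i + 1), v (i + 1 + 1) - v (i + 1)] := by
  rcases wbtw_or_wbtw_or_wbtw_or_linearIndependent (v i) (v (i + 1)) (v (i + 1 + 1)) with
    hflat | hback | hback | hli
  · exact .inl hflat
  · exact ((h.eq_or_eq_of_vertex_mem_side (mem_segment_iff_wbtw.2 hback)).elim (h.ne_add_one i)
      (h.ne_add_one_add_one i)).elim
  · exact ((h.eq_or_eq_of_vertex_mem_side (mem_segment_iff_wbtw.2 hback.symm)).elim
      (h.ne_add_one_add_one i).symm (h.ne_add_one (i + 1)).symm).elim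
  · exact .inr hli

lemma eventually_mem_sides_of_mem_frontier (h : IsSimplePolygon S v) (i : Fin n) :
    ∀ᶠ x in nhds (v (i + 1)), x ∈ frontier S → x ∈ side v i ∨ x ∈ side v (i + 1) := by
  have hclosed : IsClosed (⋃ j ∈ {j | j ≠ i ∧ j ≠ i + 1}, side v j) :=
    (Set.toFinite _).isClosed_biUnion fun j _ => by
      rw [side, segment_eq_image_lineMap]
      exact (isCompact_Icc.image AffineMap.lineMap_continuous).isClosed
  have hnot : v (i + 1) ∉ ⋃ j ∈ {j | j ≠ i ∧ j ≠ i + 1}, side v j := by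
    simp only [Set.mem_iUnion, not_exists]
    intro j hj hmem
    rcases h.eq_or_eq_of_vertex_mem_side hmem with hij | hij
    · exact hj.2 hij.symm
    · exact hj.1 (add_right_cancel hij).symm
  filter_upwards [hclosed.isOpen_compl.mem_nhds hnot] with x hx hxf
  obtain ⟨j, hj⟩ := Set.mem_iUnion.1 (h.frontier_eq ▸ hxf)
  by_contra! hne
  exact hx (Set.mem_biUnion ⟨fun hji => hne.1 (hji ▸ hj), fun hji => hne.2 (hji ▸ hj)⟩ hj)

lemma frontier_eventuallyLE_frontier_corner (h : IsSimplePolygon S v) {i : Fin n}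
    {b : Module.Basis (Fin 2) ℝ Plane} (hb₀ : b 0 = v i - v (i + 1))
    (hb₁ : b 1 = v (i + 1 + 1) - v (i + 1)) :
    frontier S ≤ᶠ[nhds (v (i + 1))] frontier (corner b (v (i + 1))) := by
  have hray : ∀ (j : Fin 2) {c : ℝ}, 0 ≤ c →
      v (i + 1) + c • b j ∈ frontier (corner b (v (i + 1))) := fun j c hc => by
    obtain ⟨k, hkj⟩ := exists_ne j
    refine mem_frontier_corner (i := k) (fun l => ?_) (by simp [hkj.symm])
    by_cases hl : j = l <;> simp [hl, hc]
  filter_upwards [h.eventually_mem_sides_of_mem_frontier i] with x hx hxf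
  rcases hx hxf with hx | hx
  · rw [side, segment_symm, segment_eq_image'] at hx
    obtain ⟨c, hc, rfl⟩ := hx
    exact hb₀ ▸ hray 0 hc.1
  · rw [side, segment_eq_image'] at hx
    obtain ⟨c, hc, rfl⟩ := hx
    exact hb₁ ▸ hray 1 hc.1

lemma exists_vertex_mem_extremePoints (h : IsSimplePolygon S v) :
    ∃ i, v i ∈ S.extremePoints ℝ := by
  obtain ⟨x, hx⟩ := h.compact.extremePoints_nonempty ⟨_, h.vertex_mem 0⟩
  have hxf : x ∈ frontier S :=
    ⟨subset_closure hx.1, fun hxint =>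
      Set.disjoint_left.1 (disjoint_interior_extremePoints S) hxint hx⟩
  obtain ⟨i, hi⟩ := Set.mem_iUnion.1 (h.frontier_eq ▸ hxf)
  by_contra! hne
  exact notMem_extremePoints_of_wbtw (mem_segment_iff_wbtw.1 hi) (h.vertex_mem i)
    (h.vertex_mem (i + 1)) (fun he => hne i (he ▸ hx)) (fun he => hne (i + 1) (he ▸ hx)) hx

lemma convex_of_forall_sideSupports (h : IsSimplePolygon S v) (hS : ∀ i, SideSupports S v i) :
    Convex ℝ S := by
  have hne : (interior S).Nonempty := by
    rw [← closure_nonempty_iff, ← h.regular]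
    exact ⟨_, h.vertex_mem 0⟩
  refine convex_of_forall_frontier_exists_supporting h.compact.isClosed hne fun x hx => ?_
  obtain ⟨i, hi⟩ := Set.mem_iUnion.1 (h.frontier_eq ▸ hx)
  obtain ⟨f, hf, hfi, hfS⟩ := hS i
  refine ⟨f, hf, fun y hy => ?_⟩
  obtain ⟨a, c, -, -, hac, rfl⟩ := hi
  rw [map_add, map_smul, map_smul, hfi, ← add_smul, hac, one_smul]
  exact hfS y hy

lemma sideSupports_add_one_of_wbtw (h : IsSimplePolygon S v) {i : Fin n}
    (hflat : Wbtw ℝ (v i) (v (i + 1)) (v (i + 1 + 1)))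
    (hi : v (i + 1) ∈ S.extremePoints ℝ ∨ SideSupports S v i) : SideSupports S v (i + 1) := by
  have hne : v i ≠ v (i + 1) := h.inj.ne (h.ne_add_one i)
  refine hi.elim (fun hext => ?_) fun hi => hi.add_one_of_wbtw hne hflat
  exact absurd hext (notMem_extremePoints_of_wbtw hflat (h.vertex_mem i) (h.vertex_mem _) hne
    (h.inj.ne (h.ne_add_one _)))

lemma sideSupports_add_one (h : IsSimplePolygon S v) {m : ℕ} (hS : ¬ HasIndecomposableCover S m)
    {i : Fin n} (hi : v (i + 1) ∈ S.extremePoints ℝ ∨ SideSupports S v i) :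
    SideSupports S v (i + 1) := by
  rcases h.wbtw_or_linearIndependent i with hflat | hli
  · exact h.sideSupports_add_one_of_wbtw hflat hi
  let b := basisOfLinearIndependentOfCardEqFinrank hli (by simp)
  have hb₀ : b 0 = v i - v (i + 1) := by simp [b]
  have hb₁ : b 1 = v (i + 1 + 1) - v (i + 1) := by simp [b]
  rcases eventuallyEq_corner_or_compl_corner_eventuallyLE h.regular.symm (h.vertex_mem _)
    (h.frontier_eventuallyLE_frontier_corner hb₀ hb₁) with hconvex | hreflex
  · have hinterior : interior S ⊆ corner b (v (i + 1)) := by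
      by_contra hnot
      exact hS (hasIndecomposableCover_of_corner h.compact.isBounded hconvex hnot m)
    have hsub : S ⊆ corner b (v (i + 1)) :=
      h.regular.trans_subset (closure_minimal hinterior (isClosed_corner b _))
    exact .of_subset_corner hsub hb₁
  · rcases hi with hext | ⟨f, hf, hfi, hfS⟩
    · exact absurd hext
        (notMem_extremePoints_of_compl_corner_eventuallyLE hreflex (zero_ne_one (α := Fin 2)))
    · have hf₀ : f (b 0) = 0 := by rw [hb₀, map_sub, hfi, sub_self]
      exact absurd (eq_zero_of_compl_corner_eventuallyLE hreflex (hfi.symm ▸ hfS) hf₀) hf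

end IsSimplePolygon

theorem statement1_general {n : ℕ} [NeZero n] {S : Set Plane} {v : Fin n → Plane}
    (hpoly : IsSimplePolygon S v) (hconcave : ¬ Convex ℝ S) (m : ℕ) :
    HasIndecomposableCover S m := by
  by_contra hS
  obtain ⟨i, hi⟩ := hpoly.exists_vertex_mem_extremePoints
  have hstart : SideSupports S v i := by
    simpa using hpoly.sideSupports_add_one hS (i := i - 1) (.inl (by simpa using hi))
  exact hconcave (hpoly.convex_of_forall_sideSupports
    (forall_of_add_one i hstart fun _ hj => hpoly.sideSupports_add_one hS (.inr hj)))

theorem statement1 {n : ℕ} [NeZero n] (S : Set Plane) (v : Fin n → Plane)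
    (hpoly : IsSimplePolygon S v)
    (hconcave : ¬ Convex ℝ S)
    (hnopar : ∀ i j : Fin n, i ≠ j → ∀ c : ℝ, v (i + 1) - v i ≠ c • (v (j + 1) - v j))
    (m : ℕ) (hm : 1 ≤ m) :
    ∃ (I : Type) (ε : I → ℝ) (p : I → Plane),
      (∀ i, 0 < ε i) ∧
      MFoldCover m (fun i => homCopy (ε i) (p i) S) Set.univ ∧
      ¬ DecomposableIntoTwoCoverings (fun i => homCopy (ε i) (p i) S) :=
  statement1_general hpoly hconcave m
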